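/- arXiv:1409.6013 — 2 statements merged into one kernel-verified Lean document; each statement's English description precedes it below -/
import Mathlib

section
/- Let X = (X₁,…,X_d) be a random vector on ℝ^d with law ν having finite first moment, and let Q : [0,1]^d → ℝ^d transport the uniform measure on [0,1]^d onto ν, with multivariate L-moments λ_α = ∫_{[0,1]^d} Q(t) L_α(t) dt. Then for every multi-index α ∈ (ℕ \ {0})^d with α ≠ (1,…,1) and every coordinate i ∈ {1,…,d}, one has |⟨λ_α, b_i⟩| ≤ E[|X_i − X_i'|] = 2 λ₂(X_i), where X_i' is an independent copy of X_i, (b₁,…,b_d) is the canonical basis of ℝ^d, and λ₂(X_i) is the second univariate L-moment of X_i. -/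
open MeasureTheory Finset

/-- The `r`-th shifted Legendre polynomial on `[0,1]` (`r ≥ 1`). -/
noncomputable def shiftedLegendre (r : ℕ) (t : ℝ) : ℝ :=
  ∑ k ∈ Finset.range r, (-1 : ℝ) ^ k * ((r - 1).choose k : ℝ) ^ 2 * t ^ (r - 1 - k) * (1 - t) ^ k

/-- The multivariate Legendre polynomial `L_α(t) = ∏_k L_{α_k}(t_k)`. -/
noncomputable def multiLegendre {d : ℕ} (α : Fin d → ℕ) (t : Fin d → ℝ) : ℝ :=
  ∏ k, shiftedLegendre (α k) (t k)

/-- The uniform probability measure on the cube `[0,1]^d`. -/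
noncomputable def unifCube (d : ℕ) : Measure (Fin d → ℝ) :=
  volume.restrict (Set.univ.pi fun _ => Set.Icc (0 : ℝ) 1)

/-!
Since `L_α` has mean zero and `|L_α| ≤ 1` on the cube,
`|∫ Q_i L_α| = |∫ (Q_i - m) L_α| ≤ E|X_i - m|` with `m = E[X_i]`, and Jensen's inequality bounds
`E|X_i - m|` by `E|X_i - X_i'|`.

The bound on the univariate polynomials is Cauchy's estimate: with `a² = t` and `b² = 1 - t`, the
`(n + 1)`-st shifted Legendre polynomial at `t` is the coefficient of `X ^ n` in
`(b X + a) ^ n (a X - b) ^ n`, whose modulus on the unit circle is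
`‖a ^ 2 - b ^ 2 z ^ 2‖ ^ n ≤ 1`. That they have mean zero follows from the beta integrals
`(n.choose k) ∫ t ^ (n - k) (1 - t) ^ k = 1 / (n + 1)` and `∑ (-1) ^ k (n.choose k) = 0`.
-/

open Polynomial hiding shiftedLegendre
open scoped Nat ComplexConjugate

section BinomialCoefficients

lemma coeff_C_mul_X_add_C_pow {R : Type*} [CommSemiring R] (a b : R) (n k : ℕ) :
    ((C b * X + C a) ^ n).coeff k = b ^ k * a ^ (n - k) * n.choose k := by
  have hcomp : (C b * X + C a) ^ n = ((X + C a) ^ n).comp (C b * X) := by simp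
  rw [hcomp, comp_C_mul_X_coeff, coeff_X_add_C_pow]
  ring

lemma coeff_mul_pow_eq_alternating_sum_choose_sq {R : Type*} [CommRing R] (a b : R) (n : ℕ) :
    ((C b * X + C a) ^ n * (C a * X + C (-b)) ^ n).coeff n =
      ∑ k ∈ range (n + 1), (-1) ^ k * (n.choose k : R) ^ 2 * (a ^ 2) ^ (n - k) * (b ^ 2) ^ k := by
  rw [coeff_mul, Nat.sum_antidiagonal_eq_sum_range_succ_mk]
  refine sum_congr rfl fun k hk => ?_
  have hkn : k ≤ n := mem_range_succ_iff.mp hk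
  rw [coeff_C_mul_X_add_C_pow, coeff_C_mul_X_add_C_pow, Nat.choose_symm hkn, Nat.sub_sub_self hkn,
    neg_pow]
  ring

lemma norm_coeff_le_of_forall_norm_eval_le {p : ℂ[X]} {M : ℝ}
    (hp : ∀ z : ℂ, ‖z‖ = 1 → ‖p.eval z‖ ≤ M) (n : ℕ) : ‖p.coeff n‖ ≤ M := by
  have hM : 0 ≤ M := (norm_nonneg _).trans (hp 1 norm_one)
  have hcoeff : ‖p.coeff n‖ ^ 2 ≤ ∑ i ∈ p.support, ‖p.coeff i‖ ^ 2 := by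
    by_cases hn : n ∈ p.support
    · exact single_le_sum (f := fun i => ‖p.coeff i‖ ^ 2) (fun _ _ => by positivity) hn
    · rw [notMem_support_iff.mp hn, norm_zero, zero_pow two_ne_zero]
      positivity
  refine (sq_le_sq₀ (norm_nonneg _) hM).mp (hcoeff.trans ?_)
  rw [p.sum_sq_norm_coeff_eq_circleAverage]
  refine Real.circleAverage_mono_on_of_le_circle
    (ContinuousOn.circleIntegrable' (by fun_prop)) fun z hz => ?_
  have hz1 : ‖z‖ = 1 := by simpa using hz
  gcongr
  exact hp z hz1

lemma norm_mul_add_mul_mul_sub_le (a b : ℝ) {z : ℂ} (hz : ‖z‖ = 1) :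
    ‖(b * z + a) * (a * z + -b)‖ ≤ a ^ 2 + b ^ 2 := by
  have hz_mul : z * conj z = 1 := by simp [Complex.mul_conj', hz]
  have hreflect : a * z + -b = z * conj (a - b * z) := by
    simp only [map_sub, map_mul, Complex.conj_ofReal]
    linear_combination (b : ℂ) * hz_mul
  calc ‖(b * z + a) * (a * z + -b)‖
      = ‖(a + b * z) * (a - b * z)‖ := by
        rw [hreflect, norm_mul, norm_mul, norm_mul, hz, one_mul, RCLike.norm_conj, add_comm]
    _ = ‖(a : ℂ) ^ 2 - (b * z) ^ 2‖ := by rw [sq_sub_sq]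
    _ ≤ ‖(a : ℂ) ^ 2‖ + ‖(b * z) ^ 2‖ := norm_sub_le _ _
    _ = a ^ 2 + b ^ 2 := by simp [hz]

lemma abs_alternating_sum_choose_sq_le {x y : ℝ} (hx : 0 ≤ x) (hy : 0 ≤ y) (n : ℕ) :
    |∑ k ∈ range (n + 1), (-1) ^ k * (n.choose k : ℝ) ^ 2 * x ^ (n - k) * y ^ k| ≤
      (x + y) ^ n := by
  obtain ⟨a, rfl⟩ : ∃ a, a ^ 2 = x := ⟨√x, Real.sq_sqrt hx⟩
  obtain ⟨b, rfl⟩ : ∃ b, b ^ 2 = y := ⟨√y, Real.sq_sqrt hy⟩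
  have hsum := coeff_mul_pow_eq_alternating_sum_choose_sq (a : ℂ) b n
  rw [← Real.norm_eq_abs, ← Complex.norm_real]
  push_cast
  rw [← hsum]
  refine norm_coeff_le_of_forall_norm_eval_le (fun z hz => ?_) n
  simp only [eval_mul, eval_pow, eval_add, eval_C, eval_X]
  rw [← mul_pow, norm_pow]
  gcongr
  exact norm_mul_add_mul_mul_sub_le a b hz

end BinomialCoefficients

section ShiftedLegendre

lemma integral_pow_mul_one_sub_pow (m k : ℕ) :
    ∫ t in (0 : ℝ)..1, t ^ m * (1 - t) ^ k = (m ! * k ! / (m + k + 1)! : ℝ) := by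
  have hbeta : Complex.betaIntegral (m + 1) (k + 1) =
      ((∫ t in (0 : ℝ)..1, t ^ m * (1 - t) ^ k : ℝ) : ℂ) := by
    simp only [Complex.betaIntegral, add_sub_cancel_right, Complex.cpow_natCast]
    rw [← intervalIntegral.integral_ofReal]
    push_cast
    rfl
  have hGamma := Complex.Gamma_mul_Gamma_eq_betaIntegral (s := m + 1) (t := k + 1)
    (by simpa using Nat.cast_add_one_pos m) (by simpa using Nat.cast_add_one_pos k)
  rw [show (m + 1 + (k + 1) : ℂ) = (m + k + 1 : ℕ) + 1 by push_cast; ring, hbeta,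
    Complex.Gamma_nat_eq_factorial, Complex.Gamma_nat_eq_factorial,
    Complex.Gamma_nat_eq_factorial] at hGamma
  rw [eq_div_iff (by positivity), mul_comm]
  exact_mod_cast hGamma.symm

lemma choose_mul_integral_pow_mul_one_sub_pow {n k : ℕ} (hk : k ≤ n) :
    (n.choose k : ℝ) * ∫ t in (0 : ℝ)..1, t ^ (n - k) * (1 - t) ^ k = 1 / (n + 1) := by
  rw [integral_pow_mul_one_sub_pow, Nat.sub_add_cancel hk, Nat.factorial_succ,
    ← Nat.choose_mul_factorial_mul_factorial hk]
  have hchoose : (n.choose k : ℝ) ≠ 0 := by exact_mod_cast (Nat.choose_pos hk).ne'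
  push_cast
  field_simp

lemma integral_shiftedLegendre_eq_zero {r : ℕ} (hr : 2 ≤ r) :
    ∫ t in (0 : ℝ)..1, shiftedLegendre r t = 0 := by
  obtain ⟨n, rfl⟩ := Nat.exists_eq_add_of_le' (one_le_two.trans hr)
  have hterm : ∀ k ∈ range (n + 1),
      ∫ t in (0 : ℝ)..1, (-1) ^ k * (n.choose k : ℝ) ^ 2 * t ^ (n - k) * (1 - t) ^ k =
        (-1) ^ k * (n.choose k : ℝ) * (1 / (n + 1)) := by
    intro k hk
    simp only [mul_assoc, intervalIntegral.integral_const_mul, sq]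
    rw [choose_mul_integral_pow_mul_one_sub_pow (mem_range_succ_iff.mp hk)]
  have halternating : ∑ k ∈ range (n + 1), (-1) ^ k * (n.choose k : ℝ) = 0 := by
    exact_mod_cast Int.alternating_sum_range_choose_of_ne (n := n) (by lia)
  simp only [shiftedLegendre, Nat.add_sub_cancel]
  rw [intervalIntegral.integral_finsetSum
      fun k _ => Continuous.intervalIntegrable (by fun_prop) _ _,
    sum_congr rfl hterm, ← sum_mul, halternating, zero_mul]

lemma abs_shiftedLegendre_le_one {r : ℕ} (hr : 1 ≤ r) {t : ℝ} (ht : t ∈ Set.Icc (0 : ℝ) 1) :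
    |shiftedLegendre r t| ≤ 1 := by
  obtain ⟨n, rfl⟩ := Nat.exists_eq_add_of_le' hr
  simpa [shiftedLegendre] using
    abs_alternating_sum_choose_sq_le ht.1 (sub_nonneg.mpr ht.2) n

end ShiftedLegendre

section MultiLegendre

variable {d : ℕ}

lemma unifCube_eq_pi (d : ℕ) :
    unifCube d = Measure.pi fun _ : Fin d => volume.restrict (Set.Icc (0 : ℝ) 1) := by
  rw [unifCube, volume_pi, Measure.restrict_pi_pi]

instance isProbabilityMeasure_unifCube (d : ℕ) : IsProbabilityMeasure (unifCube d) :=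
  ⟨by simp [unifCube, -Set.pi_univ_Icc, volume_pi_pi]⟩

lemma continuous_multiLegendre (α : Fin d → ℕ) : Continuous (multiLegendre α) := by
  unfold multiLegendre shiftedLegendre
  fun_prop

lemma ae_norm_multiLegendre_le_one {α : Fin d → ℕ} (hα : ∀ k, 1 ≤ α k) :
    ∀ᵐ t ∂unifCube d, ‖multiLegendre α t‖ ≤ 1 := by
  refine ae_restrict_of_forall_mem (MeasurableSet.univ_pi fun _ => measurableSet_Icc)
    fun t ht => ?_
  rw [Real.norm_eq_abs, multiLegendre, abs_prod]
  exact prod_le_one (fun _ _ => abs_nonneg _)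
    fun k _ => abs_shiftedLegendre_le_one (hα k) (ht k trivial)

lemma integral_multiLegendre_eq_zero {α : Fin d → ℕ} (hα : ∀ k, 1 ≤ α k)
    (hα1 : α ≠ fun _ => 1) : ∫ t, multiLegendre α t ∂unifCube d = 0 := by
  obtain ⟨k, hk⟩ := Function.ne_iff.mp hα1
  have hfactor : ∫ t in Set.Icc (0 : ℝ) 1, shiftedLegendre (α k) t = 0 := by
    rw [integral_Icc_eq_integral_Ioc, ← intervalIntegral.integral_of_le zero_le_one]
    exact integral_shiftedLegendre_eq_zero ((hα k).lt_of_ne' hk)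
  simp only [multiLegendre, unifCube_eq_pi]
  rw [integral_fintype_prod_eq_prod fun k t => shiftedLegendre (α k) t]
  exact prod_eq_zero (mem_univ k) hfactor

end MultiLegendre

section MeanDifference

variable {Ω F : Type*} [MeasurableSpace Ω] {μ : Measure Ω}
  [NormedAddCommGroup F] [NormedSpace ℝ F] [CompleteSpace F] {f : Ω → F}

lemma norm_integral_smul_le_integral_norm_sub [IsFiniteMeasure μ] {g : Ω → ℝ}
    (hf : Integrable f μ) (hg : AEStronglyMeasurable g μ) (hg_le : ∀ᵐ x ∂μ, ‖g x‖ ≤ 1)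
    (hg_zero : ∫ x, g x ∂μ = 0) (c : F) :
    ‖∫ x, g x • f x ∂μ‖ ≤ ∫ x, ‖f x - c‖ ∂μ := by
  have hg_int : Integrable g μ := .of_bound hg 1 hg_le
  have hcenter : ∫ x, g x • f x ∂μ = ∫ x, g x • (f x - c) ∂μ := by
    have hgf_int : Integrable (fun x => g x • f x) μ := hf.bdd_smul 1 hg hg_le
    simp only [smul_sub]
    rw [integral_sub hgf_int (hg_int.smul_const c), integral_smul_const, hg_zero, zero_smul,
      sub_zero]
  rw [hcenter]
  refine norm_integral_le_of_norm_le (hf.sub (integrable_const c)).norm ?_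
  filter_upwards [hg_le] with x hx
  rw [norm_smul]
  exact mul_le_of_le_one_left (norm_nonneg _) hx

lemma integral_norm_sub_integral_le [IsProbabilityMeasure μ]
    (hf : Integrable f μ) :
    ∫ x, ‖f x - ∫ y, f y ∂μ‖ ∂μ ≤ ∫ x, ∫ y, ‖f x - f y‖ ∂μ ∂μ := by
  have hdiff : Integrable (fun p : Ω × Ω => ‖f p.1 - f p.2‖) (μ.prod μ) :=
    ((hf.comp_fst μ).sub (hf.comp_snd μ)).norm
  refine integral_mono (hf.sub (integrable_const _)).norm hdiff.integral_prod_left fun x => ?_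
  calc ‖f x - ∫ y, f y ∂μ‖
      = ‖∫ y, (f x - f y) ∂μ‖ := by rw [integral_sub (integrable_const _) hf]; simp
    _ ≤ ∫ y, ‖f x - f y‖ ∂μ := norm_integral_le_integral_norm _

end MeanDifference

theorem abs_lmoment_le_two_lmoment_two_general {d : ℕ} {E F : Type*} [MeasurableSpace E]
    [NormedAddCommGroup F] [NormedSpace ℝ F] [CompleteSpace F]
    {ν : Measure E} {Q : (Fin d → ℝ) → E} (hQ : AEMeasurable Q (unifCube d))
    (hQmap : Measure.map Q (unifCube d) = ν) {f : E → F} (hf : Integrable f ν)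
    {α : Fin d → ℕ} (hα : ∀ k, 1 ≤ α k) (hα1 : α ≠ fun _ => 1) :
    ‖∫ t, multiLegendre α t • f (Q t) ∂unifCube d‖ ≤ ∫ x, ∫ y, ‖f x - f y‖ ∂ν ∂ν := by
  subst hQmap
  have := Measure.isProbabilityMeasure_map hQ
  set m := ∫ y, f y ∂Measure.map Q (unifCube d)
  calc ‖∫ t, multiLegendre α t • f (Q t) ∂unifCube d‖
      ≤ ∫ t, ‖f (Q t) - m‖ ∂unifCube d :=
        norm_integral_smul_le_integral_norm_sub (hf.comp_aemeasurable hQ)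
          (continuous_multiLegendre α).aestronglyMeasurable (ae_norm_multiLegendre_le_one hα)
          (integral_multiLegendre_eq_zero hα hα1) m
    _ = ∫ x, ‖f x - m‖ ∂Measure.map Q (unifCube d) :=
        (integral_map hQ (hf.sub (integrable_const m)).norm.aestronglyMeasurable).symm
    _ ≤ ∫ x, ∫ y, ‖f x - f y‖ ∂Measure.map Q (unifCube d) ∂Measure.map Q (unifCube d) :=
        integral_norm_sub_integral_le hf

/-- For a random vector `X` with law `ν` having finite first moment, transported
from the uniform measure on `[0,1]^d` by `Q`, and any multi-index
`α ≠ (1,…,1)` with positive entries, the `i`-th coordinate of the L-moment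
`λ_α = ∫ Q L_α` satisfies `|⟨λ_α, b_i⟩| ≤ E[|X_i − X_i'|] (= 2 λ₂(X_i))`,
where `X_i'` is an independent copy of the `i`-th marginal `X_i`. -/
theorem abs_lmoment_le_two_lmoment_two {d : ℕ}
    (ν : Measure (Fin d → ℝ)) [IsProbabilityMeasure ν]
    (hmom : Integrable (fun x => ‖x‖) ν)
    (Q : (Fin d → ℝ) → (Fin d → ℝ)) (hQmeas : Measurable Q)
    (hQmap : Measure.map Q (unifCube d) = ν)
    (α : Fin d → ℕ) (hα : ∀ k, 1 ≤ α k) (hα1 : α ≠ fun _ => 1)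
    (i : Fin d) :
    |∫ t, Q t i * multiLegendre α t ∂(unifCube d)|
      ≤ ∫ x, ∫ y, |x i - y i| ∂ν ∂ν := by
  have hi : Integrable (fun x : Fin d → ℝ => x i) ν :=
    ((integrable_norm_iff aestronglyMeasurable_id).mp hmom).eval i
  simpa only [smul_eq_mul, mul_comm, Real.norm_eq_abs] using
    abs_lmoment_le_two_lmoment_two_general hQmeas.aemeasurable hQmap hi hα hα1
end

section
/- Let Ω ⊂ ℝ^d and let μ be a probability measure on Ω that gives no mass to sets of Hausdorff dimension at most d−1 (e.g. μ absolutely continuous). Then the set K = {T ∈ L¹(Ω, ℝ^d, μ) : T = ∇φ μ-almost everywhere for some convex function φ} is closed in L¹(Ω, ℝ^d, μ): if T_n ∈ K and T_n → T in L¹, then T agrees μ-a.e. with the gradient of a convex function. The key steps are: (i) each ∇φ_n is cyclically monotone, and cyclic monotonicity passes to the L¹-limit; (ii) by Rockafellar's theorem a cyclically monotone map is contained in the subgradient of a convex function φ; (iii) since μ charges no (d−1)-dimensional set, φ is μ-a.e. differentiable and ∇φ = T μ-a.e. -/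
open MeasureTheory Filter
open scoped ENNReal

/-- `T` is (μ-a.e.) the gradient of a convex function: there is a convex set
`C` of full `μ`-measure and a function `φ`, convex on `C`, such that
`T = ∇φ` μ-almost everywhere. -/
def IsMonotoneMap {d : ℕ} (μ : Measure (EuclideanSpace ℝ (Fin d)))
    (T : EuclideanSpace ℝ (Fin d) → EuclideanSpace ℝ (Fin d)) : Prop :=
  ∃ C : Set (EuclideanSpace ℝ (Fin d)), Convex ℝ C ∧ μ Cᶜ = 0 ∧
    ∃ φ : EuclideanSpace ℝ (Fin d) → ℝ, ConvexOn ℝ C φ ∧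
      ∀ᵐ u ∂μ, HasGradientAt φ (T u) u

open scoped RealInnerProductSpace Topology

/-!
Gradients of convex functions are cyclically monotone, and cyclic monotonicity on a set is a closed
condition under pointwise convergence there, so it passes to the limit of an almost everywhere
convergent subsequence. Rockafellar's theorem then places the limit map in the subdifferential of a
convex function `φ`.

Where this subdifferential is a singleton `{p}`, `φ` is differentiable with gradient `p`: the point
is interior to the domain, because a normal vector at a boundary point could be added to `p`, and
nearby subgradients converge to `p` by compactness. The points with several subgradients form a set
of dimension at most `d - 1`. Indeed, by monotonicity of the subdifferential, `x + p ↦ x` (for `p` a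
subgradient at `x`) is a nonexpansive map, and if `p ≠ q` are subgradients at `x` then it collapses
the segment `[x + p, x + q]` to `x`. Such a segment crosses one of the countably many hyperplanes
where some coordinate takes a given rational value, so these points `x` lie in a countable union of
Lipschitz images of subsets of hyperplanes.
-/

section Supremum

variable {ι E : Type*} [AddCommMonoid E] [Module ℝ E]

theorem convexOn_iSup [Nonempty ι] {s : Set E} {f : ι → E → ℝ} (hf : ∀ i, ConvexOn ℝ s (f i)) :
    ConvexOn ℝ {x ∈ s | BddAbove (Set.range fun i ↦ f i x)} (fun x ↦ ⨆ i, f i x) := by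
  have le_combination : ∀ x ∈ {x ∈ s | BddAbove (Set.range fun i ↦ f i x)},
      ∀ y ∈ {x ∈ s | BddAbove (Set.range fun i ↦ f i x)}, ∀ a b : ℝ, 0 ≤ a → 0 ≤ b → a + b = 1 →
      ∀ i, f i (a • x + b • y) ≤ a • (⨆ i, f i x) + b • ⨆ i, f i y :=
    fun x hx y hy a b ha hb hab i ↦ ((hf i).2 hx.1 hy.1 ha hb hab).trans <| by
      gcongr
      exacts [le_ciSup hx.2 i, le_ciSup hy.2 i]
  refine ⟨fun x hx y hy a b ha hb hab ↦ ?_, fun x hx y hy a b ha hb hab ↦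
    ciSup_le (le_combination x hx y hy a b ha hb hab)⟩
  refine ⟨?_, _, Set.forall_mem_range.2 (le_combination x hx y hy a b ha hb hab)⟩
  inhabit ι
  exact (hf default).1 hx.1 hy.1 ha hb hab

end Supremum

theorem exists_ne_zero_forall_apply_le_of_notMem_interior {E : Type*} [NormedAddCommGroup E]
    [NormedSpace ℝ E] [FiniteDimensional ℝ E] {C : Set E} (hC : Convex ℝ C) {x : E} (hx : x ∈ C)
    (hxi : x ∉ interior C) : ∃ f : StrongDual ℝ E, f ≠ 0 ∧ ∀ v ∈ C, f v ≤ f x := by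
  by_cases hne : (interior C).Nonempty
  · exact geometric_hahn_banach_of_nonempty_interior_point hC hxi hne
  have direction_lt_top : (affineSpan ℝ C).direction < ⊤ := by
    rwa [lt_top_iff_ne_top, Ne, AffineSubspace.direction_eq_top_iff_of_nonempty
      ⟨x, subset_affineSpan ℝ C hx⟩, ← hC.interior_nonempty_iff_affineSpan_eq_top]
  obtain ⟨f, hf, hker⟩ := Submodule.exists_le_ker_of_lt_top _ direction_lt_top
  refine ⟨f.toContinuousLinearMap, by simpa using hf, fun v hv ↦ ?_⟩
  have apply_sub : f (v - x) = 0 := hker <| AffineSubspace.vsub_mem_direction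
    (subset_affineSpan ℝ C hv) (subset_affineSpan ℝ C hx)
  rw [map_sub, sub_eq_zero] at apply_sub
  exact apply_sub.le

variable {E : Type*} [NormedAddCommGroup E] [InnerProductSpace ℝ E]

section Subdifferential

/-- The subdifferential at `x` of the function equal to `φ` on `C` and to `+∞` outside `C`; it is
empty when `x ∉ C`. -/
def subdifferentialOn (φ : E → ℝ) (C : Set E) (x : E) : Set E :=
  {p | x ∈ C ∧ ∀ v ∈ C, φ x + ⟪p, v - x⟫ ≤ φ v}

variable {φ : E → ℝ} {C : Set E} {x y p q : E}

theorem convex_subdifferentialOn : Convex ℝ (subdifferentialOn φ C x) := by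
  rintro p ⟨hx, hp⟩ q ⟨-, hq⟩ a b ha hb hab
  refine ⟨hx, fun v hv ↦ ?_⟩
  calc φ x + ⟪a • p + b • q, v - x⟫
      = a * (φ x + ⟪p, v - x⟫) + b * (φ x + ⟪q, v - x⟫) := by
        rw [inner_add_left, real_inner_smul_left, real_inner_smul_left]
        linear_combination -hab * φ x
    _ ≤ a * φ v + b * φ v := by gcongr; exacts [hp v hv, hq v hv]
    _ = φ v := by rw [← add_mul, hab, one_mul]

theorem inner_sub_sub_nonneg_of_mem_subdifferentialOn (hp : p ∈ subdifferentialOn φ C x)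
    (hq : q ∈ subdifferentialOn φ C y) : 0 ≤ ⟪x - y, p - q⟫ := by
  have hxy := hp.2 y hq.1
  have hyx := hq.2 x hp.1
  rw [← neg_sub x y, inner_neg_right] at hxy
  rw [real_inner_comm, inner_sub_left]
  linarith

theorem mem_subdifferentialOn_of_hasGradientAt [CompleteSpace E] (hφ : ConvexOn ℝ C φ)
    (hx : x ∈ C) (h : HasGradientAt φ p x) : p ∈ subdifferentialOn φ C x := by
  refine ⟨hx, fun v hv ↦ ?_⟩
  have hderiv : HasDerivAt (φ ∘ AffineMap.lineMap x v) ⟪p, v - x⟫ (0 : ℝ) := by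
    have hgrad : HasFDerivAt φ (InnerProductSpace.toDual ℝ E p)
        (AffineMap.lineMap x v (0 : ℝ)) := by
      simpa only [AffineMap.lineMap_apply_zero] using h.hasFDerivAt
    exact hgrad.comp_hasDerivAt 0 AffineMap.hasDerivAt_lineMap
  have le_slope := (hφ.comp_affineMap (AffineMap.lineMap x v)).le_slope_of_hasDerivAt
    (by simpa using hx) (by simpa using hv) zero_lt_one hderiv
  simp only [slope_def_field, Function.comp_apply, AffineMap.lineMap_apply_zero,
    AffineMap.lineMap_apply_one, sub_zero, div_one] at le_slope
  linarith

theorem mem_subdifferentialOn_of_mem_nhds {s : Set E} (hφ : ConvexOn ℝ C φ) (hx : x ∈ C)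
    (hs : s ∈ 𝓝 x) (hp : p ∈ subdifferentialOn φ s x) : p ∈ subdifferentialOn φ C x := by
  have hlocal : IsLocalMinOn (fun v ↦ φ v - ⟪p, v⟫) C x := by
    filter_upwards [mem_nhdsWithin_of_mem_nhds hs] with v hv
    have := hp.2 v hv
    rw [inner_sub_right] at this
    linarith
  have hconvex : ConvexOn ℝ C fun v ↦ φ v - ⟪p, v⟫ :=
    hφ.sub ((innerₗ E p).concaveOn hφ.1)
  refine ⟨hx, fun v hv ↦ ?_⟩
  have := IsMinOn.of_isLocalMinOn_of_convexOn hx hlocal hconvex hv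
  simp only [Set.mem_ofPred_eq] at this
  rw [inner_sub_right]
  linarith

theorem subdifferentialOn_nonempty [CompleteSpace E] (hφ : ConvexOn ℝ C φ)
    (hcont : ContinuousOn φ (interior C)) (hx : x ∈ interior C) :
    (subdifferentialOn φ C x).Nonempty := by
  let strictEpigraph : Set (E × ℝ) := {z | z.1 ∈ interior C ∧ φ z.1 < z.2}
  have hopen : IsOpen strictEpigraph :=
    ((hcont.comp continuousOn_fst fun _ hz ↦ hz).prodMk continuousOn_snd).isOpen_inter_preimage
      (isOpen_interior.preimage continuous_fst) isOpen_lt_prod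
  have hconvex : Convex ℝ strictEpigraph :=
    (hφ.subset interior_subset hφ.1.interior).convex_strict_epigraph
  obtain ⟨f, hf⟩ := geometric_hahn_banach_open_point hconvex hopen
    (x := (x, φ x)) fun h ↦ lt_irrefl _ h.2
  let g : StrongDual ℝ E := f.comp (.inl ℝ E ℝ)
  let c : ℝ := f (0, 1)
  have f_apply (y : E) (t : ℝ) : f (y, t) = g y + t * c := by
    rw [← smul_eq_mul, ← map_smul, ContinuousLinearMap.comp_apply, ← map_add]
    simp
  have separation : ∀ y ∈ interior C, ∀ t > φ y, g y + t * c < g x + φ x * c := by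
    intro y hy t ht
    simpa only [f_apply] using hf (y, t) ⟨hy, ht⟩
  have hc : c < 0 := by
    linarith [separation x hx (φ x + 1) (lt_add_one _)]
  refine ⟨(InnerProductSpace.toDual ℝ E).symm ((-c)⁻¹ • g),
    mem_subdifferentialOn_of_mem_nhds hφ (interior_subset hx) (isOpen_interior.mem_nhds hx)
      ⟨hx, fun y hy ↦ le_of_forall_gt_imp_ge_of_dense fun t ht ↦ ?_⟩⟩
  have hslope : (-c)⁻¹ * (g y - g x) ≤ t - φ x := by
    rw [inv_mul_le_iff₀ (neg_pos.2 hc)]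
    linarith [separation y hy t ht]
  rw [InnerProductSpace.toDual_symm_apply, _root_.smul_apply, map_sub, smul_eq_mul]
  linarith

theorem norm_le_of_mem_subdifferentialOn_of_lipschitzOnWith {K : NNReal} {s : Set E}
    (hK : LipschitzOnWith K φ s) (hs : s ∈ 𝓝 x) (hp : p ∈ subdifferentialOn φ s x) : ‖p‖ ≤ K := by
  obtain rfl | hp0 := eq_or_ne p 0
  · simp
  have hline : Tendsto (fun t : ℝ ↦ x + t • p) (𝓝[>] 0) (𝓝 x) := by
    have : Continuous fun t : ℝ ↦ x + t • p := by fun_prop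
    simpa using (this.tendsto 0).mono_left nhdsWithin_le_nhds
  obtain ⟨t, hts, ht⟩ := ((hline.eventually hs).and self_mem_nhdsWithin).exists
  have ht : 0 < t := ht
  refine le_of_mul_le_mul_right ?_ (mul_pos ht (norm_pos_iff.2 hp0))
  calc ‖p‖ * (t * ‖p‖) = ⟪p, (x + t • p) - x⟫ := by
        rw [add_sub_cancel_left, real_inner_smul_right, real_inner_self_eq_norm_sq]
        ring
    _ ≤ φ (x + t • p) - φ x := le_sub_iff_add_le'.2 (hp.2 _ hts)
    _ ≤ dist (φ (x + t • p)) (φ x) := le_abs_self _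
    _ ≤ K * dist (x + t • p) x := hK.dist_le_mul _ hts _ hp.1
    _ = K * (t * ‖p‖) := by
        rw [dist_self_add_left, norm_smul, Real.norm_of_nonneg ht.le]

theorem mem_subdifferentialOn_of_tendsto {ι : Type*} {l : Filter ι} [l.NeBot] {y q : ι → E}
    (hx : x ∈ C) (hφ : ContinuousAt φ x) (hy : Tendsto y l (𝓝 x)) (hq : Tendsto q l (𝓝 p))
    (hyq : ∀ᶠ i in l, q i ∈ subdifferentialOn φ C (y i)) : p ∈ subdifferentialOn φ C x := by
  refine ⟨hx, fun v hv ↦ ?_⟩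
  have hlim : Tendsto (fun i ↦ φ (y i) + ⟪q i, v - y i⟫) l (𝓝 (φ x + ⟪p, v - x⟫)) :=
    (hφ.tendsto.comp hy).add (hq.inner (tendsto_const_nhds.sub hy))
  exact le_of_tendsto hlim (hyq.mono fun i hi ↦ hi.2 v hv)

theorem mem_interior_of_subsingleton_subdifferentialOn [FiniteDimensional ℝ E]
    (hC : Convex ℝ C) (hp : p ∈ subdifferentialOn φ C x)
    (hsub : (subdifferentialOn φ C x).Subsingleton) : x ∈ interior C := by
  have := FiniteDimensional.complete ℝ E
  by_contra hxi
  obtain ⟨f, hf, hfx⟩ := exists_ne_zero_forall_apply_le_of_notMem_interior hC hp.1 hxi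
  let n := (InnerProductSpace.toDual ℝ E).symm f
  have hpn : p + n ∈ subdifferentialOn φ C x := by
    refine ⟨hp.1, fun v hv ↦ ?_⟩
    rw [inner_add_left, InnerProductSpace.toDual_symm_apply, map_sub]
    linarith [hfx v hv, hp.2 v hv]
  have hn : n = 0 := by simpa using hsub hpn hp
  exact hf (by simpa [n] using hn)

theorem tendsto_of_mem_subdifferentialOn [FiniteDimensional ℝ E] {q : E → E}
    (hφ : ConvexOn ℝ C φ) (hx : x ∈ interior C) (hp : subdifferentialOn φ C x = {p})
    (hq : ∀ᶠ y in 𝓝 x, q y ∈ subdifferentialOn φ C y) : Tendsto q (𝓝 x) (𝓝 p) := by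
  have := FiniteDimensional.proper ℝ E
  have hCx : interior C ∈ 𝓝 x := isOpen_interior.mem_nhds hx
  obtain ⟨K, s, hs, hK⟩ := hφ.locallyLipschitzOn_interior hx
  rw [nhdsWithin_eq_nhds.2 hCx] at hs
  have hbound : ∀ᶠ y in 𝓝 x, q y ∈ Metric.closedBall 0 (K : ℝ) := by
    filter_upwards [hq, eventually_mem_nhds_iff.2 (inter_mem hs hCx)] with y hqy hy
    exact mem_closedBall_zero_iff.2 <| norm_le_of_mem_subdifferentialOn_of_lipschitzOnWith
      (hK.mono Set.inter_subset_left) hy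
      ⟨mem_of_mem_nhds hy, fun v hv ↦ hqy.2 v (interior_subset hv.2)⟩
  refine (isCompact_closedBall _ _).tendsto_nhds_of_unique_mapClusterPt hbound fun p' _ hp' ↦ ?_
  obtain ⟨U, hU, hqU⟩ := mapClusterPt_iff_ultrafilter.1 hp'
  have hp'_mem : p' ∈ subdifferentialOn φ C x := mem_subdifferentialOn_of_tendsto
    (interior_subset hx) (hφ.continuousOn_interior.continuousAt hCx) hU hqU (hU hq)
  simpa only [hp, Set.mem_singleton_iff] using hp'_mem

theorem hasGradientAt_of_subdifferentialOn_eq_singleton [FiniteDimensional ℝ E] [CompleteSpace E]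
    (hφ : ConvexOn ℝ C φ) (hp : subdifferentialOn φ C x = {p}) : HasGradientAt φ p x := by
  have hpx : p ∈ subdifferentialOn φ C x := hp ▸ Set.mem_singleton p
  have hx : x ∈ interior C := mem_interior_of_subsingleton_subdifferentialOn hφ.1 hpx
    (hp ▸ Set.subsingleton_singleton)
  have exists_subgradient : ∀ y ∈ interior C, ∃ q, q ∈ subdifferentialOn φ C y :=
    fun y hy ↦ subdifferentialOn_nonempty hφ hφ.continuousOn_interior hy
  choose! q hq using exists_subgradient
  have hqx : ∀ᶠ y in 𝓝 x, q y ∈ subdifferentialOn φ C y :=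
    mem_of_superset (isOpen_interior.mem_nhds hx) hq
  have hlim : Tendsto (fun y ↦ ‖q y - p‖) (𝓝 x) (𝓝 0) :=
    tendsto_iff_norm_sub_tendsto_zero.1 (tendsto_of_mem_subdifferentialOn hφ hx hp hqx)
  rw [hasGradientAt_iff_isLittleO, Asymptotics.isLittleO_iff]
  intro ε hε
  filter_upwards [hqx, hlim.eventually_le_const hε] with y hqy hyε
  have lower : φ x + ⟪p, y - x⟫ ≤ φ y := hpx.2 y hqy.1
  have upper : φ y - ⟪q y, y - x⟫ ≤ φ x := by
    simpa only [← neg_sub y x, inner_neg_right, ← sub_eq_add_neg] using hqy.2 x hpx.1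
  calc ‖φ y - φ x - ⟪p, y - x⟫‖ = φ y - φ x - ⟪p, y - x⟫ :=
        Real.norm_of_nonneg (by linarith)
    _ ≤ ⟪q y - p, y - x⟫ := by rw [inner_sub_left]; linarith
    _ ≤ ‖q y - p‖ * ‖y - x‖ := real_inner_le_norm _ _
    _ ≤ ε * ‖y - x‖ := by gcongr

end Subdifferential

section CyclicMonotonicity

/-- The quantity `⟨T u₀, u₁ - u₀⟩ + ⋯ + ⟨T uₘ₋₁, uₘ - uₘ₋₁⟩ + ⟨T uₘ, x - uₘ⟩` attached to the chain
`u₀ → ⋯ → uₘ → x`; only the first `m + 1` terms of the sequence `u` matter. -/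
def chainSum (T : E → E) (u : ℕ → E) (m : ℕ) (x : E) : ℝ :=
  ∑ i ∈ Finset.range m, ⟪T (u i), u (i + 1) - u i⟫ + ⟪T (u m), x - u m⟫

/-- Cyclic monotonicity of the restriction of `T` to `A`: the sum along every closed chain
`u₀ → ⋯ → uₘ → u₀` in `A` is nonpositive. -/
def IsCyclicallyMonotoneOn (T : E → E) (A : Set E) : Prop :=
  ∀ (u : ℕ → E) (m : ℕ), (∀ i, u i ∈ A) → chainSum T u m (u 0) ≤ 0

variable {T : E → E} {A B C : Set E} {φ : E → ℝ} {u : ℕ → E} {m : ℕ} {x v w : E}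

theorem chainSum_update_succ : chainSum T (Function.update u (m + 1) w) (m + 1) x =
    chainSum T u m w + ⟪T w, x - w⟫ := by
  have update_of_le {i : ℕ} (hi : i ≤ m) : Function.update u (m + 1) w i = u i :=
    Function.update_of_ne (by lia) _ _
  have hsum : ∑ i ∈ Finset.range m, ⟪T (Function.update u (m + 1) w i),
      Function.update u (m + 1) w (i + 1) - Function.update u (m + 1) w i⟫ =
      ∑ i ∈ Finset.range m, ⟪T (u i), u (i + 1) - u i⟫ :=
    Finset.sum_congr rfl fun i hi ↦ by
      rw [Finset.mem_range] at hi
      rw [update_of_le hi.le, update_of_le hi]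
  rw [chainSum, chainSum, Finset.sum_range_succ, hsum, update_of_le le_rfl, Function.update_self]

theorem convexOn_chainSum : ConvexOn ℝ Set.univ (chainSum T u m) := by
  have hlin : ConvexOn ℝ Set.univ fun x ↦ ⟪T (u m), x⟫ :=
    (innerₗ E (T (u m))).convexOn convex_univ
  refine (hlin.add_const (∑ i ∈ Finset.range m, ⟪T (u i), u (i + 1) - u i⟫ -
    ⟪T (u m), u m⟫)).congr fun x _ ↦ ?_
  rw [chainSum, inner_sub_right (T (u m)) x, Pi.add_apply]
  ring

theorem chainSum_le_sub (hT : ∀ a ∈ A, T a ∈ subdifferentialOn φ C a) (hu : ∀ i, u i ∈ A)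
    (hx : x ∈ C) : chainSum T u m x ≤ φ x - φ (u 0) := by
  have step_le (i : ℕ) {v : E} (hv : v ∈ C) : ⟪T (u i), v - u i⟫ ≤ φ v - φ (u i) :=
    le_sub_iff_add_le'.2 ((hT _ (hu i)).2 v hv)
  calc chainSum T u m x
      ≤ ∑ i ∈ Finset.range m, (φ (u (i + 1)) - φ (u i)) + (φ x - φ (u m)) :=
        add_le_add (Finset.sum_le_sum fun i _ ↦ step_le i (hT _ (hu (i + 1))).1) (step_le m hx)
    _ = φ x - φ (u 0) := by rw [Finset.sum_range_sub fun i ↦ φ (u i)]; ring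

theorem isCyclicallyMonotoneOn_of_mem_subdifferentialOn
    (hT : ∀ a ∈ A, T a ∈ subdifferentialOn φ C a) : IsCyclicallyMonotoneOn T A :=
  fun _ _ hu ↦ (chainSum_le_sub hT hu (hT _ (hu 0)).1).trans_eq (sub_self _)

namespace IsCyclicallyMonotoneOn

theorem mono (hT : IsCyclicallyMonotoneOn T B) (hAB : A ⊆ B) : IsCyclicallyMonotoneOn T A :=
  fun u m hu ↦ hT u m fun i ↦ hAB (hu i)

theorem of_tendsto {ι : Type*} {l : Filter ι} [l.NeBot] {S : ι → E → E}
    (hS : ∀ i, IsCyclicallyMonotoneOn (S i) A)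
    (hlim : ∀ a ∈ A, Tendsto (fun i ↦ S i a) l (𝓝 (T a))) : IsCyclicallyMonotoneOn T A := by
  intro u m hu
  have hchain : Tendsto (fun i ↦ chainSum (S i) u m (u 0)) l (𝓝 (chainSum T u m (u 0))) :=
    (tendsto_finsetSum _ fun j _ ↦ (hlim _ (hu j)).inner tendsto_const_nhds).add
      ((hlim _ (hu m)).inner tendsto_const_nhds)
  exact le_of_tendsto' hchain fun i ↦ hS i u m hu

/-- Rockafellar's theorem. The potential is `φ x = sup chainSum T u m x` over all chains in `A` that
start at a fixed base point, and `C` is the set where this supremum is finite. -/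
theorem exists_convexOn_mem_subdifferentialOn (hT : IsCyclicallyMonotoneOn T A) :
    ∃ (C : Set E) (φ : E → ℝ), ConvexOn ℝ C φ ∧ ∀ a ∈ A, T a ∈ subdifferentialOn φ C a := by
  obtain rfl | ⟨a₀, ha₀⟩ := A.eq_empty_or_nonempty
  · exact ⟨Set.univ, 0, convexOn_const 0 convex_univ, fun a ha ↦ ha.elim⟩
  let Chain := {u : ℕ → E // u 0 = a₀ ∧ ∀ i, u i ∈ A} × ℕ
  have : Nonempty Chain := ⟨⟨fun _ ↦ a₀, rfl, fun _ ↦ ha₀⟩, 0⟩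
  let f (c : Chain) (x : E) : ℝ := chainSum T c.1 c.2 x
  have exists_extension (c : Chain) {a : E} (ha : a ∈ A) :
      ∃ c' : Chain, ∀ x, f c' x = f c a + ⟪T a, x - a⟫ := by
    obtain ⟨⟨u, hu₀, hu⟩, m⟩ := c
    refine ⟨⟨⟨Function.update u (m + 1) a, by simpa using hu₀, fun i ↦ ?_⟩, m + 1⟩,
      fun x ↦ chainSum_update_succ⟩
    obtain rfl | hi := eq_or_ne i (m + 1)
    · simpa using ha
    · simpa [hi] using hu i
  refine ⟨_, fun x ↦ ⨆ c, f c x, convexOn_iSup fun c ↦ convexOn_chainSum, fun a ha ↦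
    ⟨⟨Set.mem_univ a, -⟪T a, a₀ - a⟫, ?_⟩, fun v hv ↦ ?_⟩⟩
  · rintro _ ⟨c, rfl⟩
    obtain ⟨c', hc'⟩ := exists_extension c ha
    have closed_le : f c' a₀ ≤ 0 := c'.1.2.1 ▸ hT c'.1 c'.2 c'.1.2.2
    linarith [hc' a₀]
  · refine le_sub_iff_add_le.1 (ciSup_le fun c ↦ ?_)
    obtain ⟨c', hc'⟩ := exists_extension c ha
    linarith [hc' v, le_ciSup hv.2 c']

end IsCyclicallyMonotoneOn

end CyclicMonotonicity

section Dimension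

theorem dimH_setOf_apply_eq_le {V : Type*} [NormedAddCommGroup V] [NormedSpace ℝ V]
    [FiniteDimensional ℝ V] {f : Module.Dual ℝ V} (hf : f ≠ 0) (c : ℝ) :
    dimH {y | f y = c} ≤ (Module.finrank ℝ V : ℝ≥0∞) - 1 := by
  obtain hempty | hne := {y | f y = c}.eq_empty_or_nonempty
  · simp [hempty]
  have vectorSpan_le : vectorSpan ℝ {y | f y = c} ≤ f.ker := by
    rw [vectorSpan_def, Submodule.span_le]
    rintro _ ⟨y, hy, z, hz, rfl⟩
    simpa [sub_eq_zero] using hy.trans hz.symm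
  have hconvex : Convex ℝ {y | f y = c} := (convex_singleton c).linear_preimage f
  rw [Real.Convex.dimH_eq_finrank_vectorSpan hconvex hne,
    ← Module.Dual.finrank_ker_add_one_of_ne_zero hf, Nat.cast_add, Nat.cast_one,
    ENNReal.add_sub_cancel_right ENNReal.one_ne_top]
  exact_mod_cast Submodule.finrank_mono vectorSpan_le

theorem norm_le_norm_add_of_inner_nonneg {x y : E} (h : 0 ≤ ⟪x, y⟫) : ‖x‖ ≤ ‖x + y‖ := by
  refine le_of_sq_le_sq ?_ (norm_nonneg _)
  rw [norm_add_sq_real]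
  linarith [sq_nonneg ‖y‖]

variable {F : E → Set E}

theorem exists_lipschitzOnWith_resolvent
    (hF : ∀ x y, ∀ p ∈ F x, ∀ q ∈ F y, 0 ≤ ⟪x - y, p - q⟫) :
    ∃ J : E → E, LipschitzOnWith 1 J {z | ∃ x, z - x ∈ F x} ∧ ∀ x, ∀ p ∈ F x, J (x + p) = x := by
  have norm_sub_le {x y z w : E} (hx : z - x ∈ F x) (hy : w - y ∈ F y) :
      ‖x - y‖ ≤ ‖z - w‖ := by
    have := norm_le_norm_add_of_inner_nonneg (hF x y _ hx _ hy)
    rwa [show x - y + (z - x - (w - y)) = z - w by abel] at this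
  choose! J hJ using fun z (hz : ∃ x, z - x ∈ F x) ↦ hz
  refine ⟨J, LipschitzOnWith.of_dist_le_mul fun z hz w hw ↦ ?_, fun x p hp ↦ ?_⟩
  · simpa [dist_eq_norm] using norm_sub_le (hJ z hz) (hJ w hw)
  · have hp' : x + p - x ∈ F x := by rwa [add_sub_cancel_left]
    simpa [sub_eq_zero] using norm_sub_le (hJ (x + p) ⟨x, hp'⟩) hp'

theorem dimH_setOf_nontrivial_le [FiniteDimensional ℝ E]
    (hF : ∀ x y, ∀ p ∈ F x, ∀ q ∈ F y, 0 ≤ ⟪x - y, p - q⟫) (hconvex : ∀ x, Convex ℝ (F x)) :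
    dimH {x | (F x).Nontrivial} ≤ (Module.finrank ℝ E : ℝ≥0∞) - 1 := by
  obtain ⟨J, hJ, hJF⟩ := exists_lipschitzOnWith_resolvent hF
  let b := stdOrthonormalBasis ℝ E
  let D : Set E := {z | ∃ x, z - x ∈ F x}
  let H (k : Fin (Module.finrank ℝ E) × ℚ) : Set E := {z | innerₗ E (b k.1) z = k.2}
  have hcover : {x | (F x).Nontrivial} ⊆ ⋃ k, J '' (D ∩ H k) := by
    rintro x ⟨p, hp, q, hq, hpq⟩
    obtain ⟨i, hi⟩ : ∃ i, ⟪b i, x + p⟫ ≠ ⟪b i, x + q⟫ := by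
      contrapose! hpq
      exact add_left_cancel <| InnerProductSpace.ext_inner_left_basis b.toBasis <| by
        simpa only [b.coe_toBasis] using hpq
    obtain ⟨r, hr⟩ := exists_rat_btwn (inf_lt_sup.2 hi)
    obtain ⟨z, hz, hzr⟩ : (r : ℝ) ∈ innerₗ E (b i) '' segment ℝ (x + p) (x + q) := by
      rw [← LinearMap.coe_toAffineMap, image_segment, segment_eq_uIcc]
      exact ⟨hr.1.le, hr.2.le⟩
    have hzx : z - x ∈ F x := (hconvex x).segment_subset hp hq <| by
      rwa [← mem_segment_translate ℝ x, add_sub_cancel]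
    exact Set.mem_iUnion.2 ⟨(i, r), z, ⟨⟨x, hzx⟩, hzr⟩, by simpa using hJF x _ hzx⟩
  have hb (i) : innerₗ E (b i) ≠ 0 := fun h ↦ b.orthonormal.ne_zero i <| by
    simpa using LinearMap.congr_fun h (b i)
  calc dimH {x | (F x).Nontrivial} ≤ ⨆ k, dimH (J '' (D ∩ H k)) :=
        (dimH_mono hcover).trans_eq (dimH_iUnion _)
    _ ≤ ⨆ k, dimH (H k) := iSup_mono fun k ↦
        (hJ.mono Set.inter_subset_left).dimH_image_le.trans (dimH_mono Set.inter_subset_right)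
    _ ≤ (Module.finrank ℝ E : ℝ≥0∞) - 1 := iSup_le fun k ↦ dimH_setOf_apply_eq_le (hb k.1) _

end Dimension

theorem tendstoInMeasure_of_tendsto_integral_norm_sub {α G ι : Type*} [MeasurableSpace α]
    [NormedAddCommGroup G] {μ : Measure α} {l : Filter ι} {f : ι → α → G} {g : α → G}
    (hf : ∀ i, Integrable (f i) μ) (hg : Integrable g μ)
    (hfg : Tendsto (fun i ↦ ∫ a, ‖f i a - g a‖ ∂μ) l (𝓝 0)) : TendstoInMeasure μ f l g := by
  refine tendstoInMeasure_of_tendsto_eLpNorm one_ne_zero (fun i ↦ (hf i).aestronglyMeasurable)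
    hg.aestronglyMeasurable ?_
  have eLpNorm_eq (i : ι) :
      eLpNorm (f i - g) 1 μ = ENNReal.ofReal (∫ a, ‖f i a - g a‖ ∂μ) := by
    rw [eLpNorm_one_eq_lintegral_enorm]
    exact (ofReal_integral_norm_eq_lintegral_enorm ((hf i).sub hg)).symm
  simpa only [eLpNorm_eq, ENNReal.ofReal_zero] using ENNReal.tendsto_ofReal hfg

namespace IsMonotoneMap

variable {d : ℕ} {μ : Measure (EuclideanSpace ℝ (Fin d))}
  {T : EuclideanSpace ℝ (Fin d) → EuclideanSpace ℝ (Fin d)}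

theorem exists_isCyclicallyMonotoneOn (hT : IsMonotoneMap μ T) :
    ∃ A ∈ ae μ, IsCyclicallyMonotoneOn T A := by
  obtain ⟨C, -, hCμ, φ, hφ, hgrad⟩ := hT
  exact ⟨C ∩ {u | HasGradientAt φ (T u) u}, inter_mem hCμ hgrad,
    isCyclicallyMonotoneOn_of_mem_subdifferentialOn fun _ ha ↦
      mem_subdifferentialOn_of_hasGradientAt hφ ha.1 ha.2⟩

theorem of_isCyclicallyMonotoneOn
    (hdim : ∀ s : Set (EuclideanSpace ℝ (Fin d)), dimH s ≤ (d : ℝ≥0∞) - 1 → μ s = 0)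
    {A : Set (EuclideanSpace ℝ (Fin d))} (hA : A ∈ ae μ) (hT : IsCyclicallyMonotoneOn T A) :
    IsMonotoneMap μ T := by
  obtain ⟨C, φ, hφ, hTφ⟩ := hT.exists_convexOn_mem_subdifferentialOn
  have dimH_le : dimH {u | (subdifferentialOn φ C u).Nontrivial} ≤ (d : ℝ≥0∞) - 1 := by
    simpa only [finrank_euclideanSpace_fin] using dimH_setOf_nontrivial_le
      (F := subdifferentialOn φ C)
      (fun _ _ _ hp _ hq ↦ inner_sub_sub_nonneg_of_mem_subdifferentialOn hp hq)
      (fun _ ↦ convex_subdifferentialOn)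
  have subsingleton_ae : ∀ᵐ u ∂μ, (subdifferentialOn φ C u).Subsingleton := by
    simpa only [ae_iff, Set.not_subsingleton_iff] using hdim _ dimH_le
  refine ⟨C, hφ.1, mem_of_superset hA fun a ha ↦ (hTφ a ha).1, φ, hφ, ?_⟩
  filter_upwards [hA, subsingleton_ae] with u hu hsub
  exact hasGradientAt_of_subdifferentialOn_eq_singleton hφ (hsub.eq_singleton_of_mem (hTφ u hu))

end IsMonotoneMap

theorem monotoneMaps_closed_in_L1_general {d : ℕ} {μ : Measure (EuclideanSpace ℝ (Fin d))}
    (hdim : ∀ s : Set (EuclideanSpace ℝ (Fin d)), dimH s ≤ (d : ℝ≥0∞) - 1 → μ s = 0)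
    {ι : Type*} {l : Filter ι} [l.NeBot] [l.IsCountablyGenerated]
    {T : ι → EuclideanSpace ℝ (Fin d) → EuclideanSpace ℝ (Fin d)}
    {Tlim : EuclideanSpace ℝ (Fin d) → EuclideanSpace ℝ (Fin d)}
    (hT : ∀ i, IsMonotoneMap μ (T i)) (hlim : TendstoInMeasure μ T l Tlim) :
    IsMonotoneMap μ Tlim := by
  obtain ⟨ns, -, hns⟩ := hlim.exists_seq_tendsto_ae'
  choose A hAμ hA using fun i ↦ (hT i).exists_isCyclicallyMonotoneOn
  refine .of_isCyclicallyMonotoneOn hdim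
    (A := {u | Tendsto (fun i ↦ T (ns i) u) atTop (𝓝 (Tlim u))} ∩ ⋂ i, A (ns i))
    (inter_mem hns (countable_iInter_mem.2 fun i ↦ hAμ (ns i))) ?_
  exact .of_tendsto (fun i ↦ (hA (ns i)).mono fun a ha ↦ Set.mem_iInter.1 ha.2 i)
    fun a ha ↦ ha.1

/-- The set `K` of `μ`-a.e. gradients of convex functions is closed in
`L¹(Ω, ℝ^d, μ)`: if each `T_n` is μ-a.e. the gradient of a convex function,
all `T_n` and `T` are integrable, and `T_n → T` in `L¹(μ)`, then `T` is also
μ-a.e. the gradient of a convex function.  Here `μ` is a probability measure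
on `Ω ⊂ ℝ^d` giving no mass to sets of Hausdorff dimension at most `d − 1`. -/
theorem monotoneMaps_closed_in_L1 {d : ℕ}
    (Ω : Set (EuclideanSpace ℝ (Fin d)))
    (μ : Measure (EuclideanSpace ℝ (Fin d))) [IsProbabilityMeasure μ]
    (hΩfull : μ Ωᶜ = 0)
    (hdim : ∀ s : Set (EuclideanSpace ℝ (Fin d)), dimH s ≤ (d : ℝ≥0∞) - 1 → μ s = 0)
    (T : ℕ → EuclideanSpace ℝ (Fin d) → EuclideanSpace ℝ (Fin d))
    (Tlim : EuclideanSpace ℝ (Fin d) → EuclideanSpace ℝ (Fin d))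
    (hT : ∀ m, IsMonotoneMap μ (T m))
    (hTint : ∀ m, Integrable (T m) μ) (hTlimint : Integrable Tlim μ)
    (hL1 : Tendsto (fun m => ∫ u, ‖T m u - Tlim u‖ ∂μ) atTop (nhds 0)) :
    IsMonotoneMap μ Tlim :=
  monotoneMaps_closed_in_L1_general hdim hT
    (tendstoInMeasure_of_tendsto_integral_norm_sub hTint hTlimint hL1)
end
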